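/- Let m ≥ 3, ω^m = 1, and 1 < p < 2^{1/4m} with p^{2m} different from the second Pisot number. Then every interior point of (p^m − 1)·J_q, where q = pω, has a universal expansion in base q: a {0,1}-sequence (d_i) with ∑ d_i q^{-i} = z that contains every finite {0,1}-block as a consecutive subblock. -/

import Mathlib

def IsExpansionC (q z : ℂ) (c : ℕ → ℕ) : Prop :=
  (∀ k, c k ≤ 1) ∧ HasSum (fun k : ℕ => (c (k + 1) : ℂ) / q ^ (k + 1)) z

def JC (q : ℂ) : Set ℂ := {z | ∃ c, IsExpansionC q z c}

/-- A {0,1}-sequence (indexed from 1) is universal if it contains every finite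
{0,1}-block as a consecutive subblock. -/
def Universal (d : ℕ → ℕ) : Prop :=
  ∀ w : List ℕ, (∀ b ∈ w, b ≤ 1) →
    ∃ n : ℕ, ∀ i < w.length, d (n + 1 + i) = w.getD i 0


def ev {R : Type*} [CommRing R] (x : R) (S : Finset ℕ) : R := ∑ i ∈ S, x ^ i

def InA (S : Finset ℕ) : Prop := ∀ i ∈ S, i % 4 ≠ 3

def sh (k : ℕ) (S : Finset ℕ) : Finset ℕ := S.map (addRightEmbedding k)

lemma ev_sh {R : Type*} [CommRing R] (x : R) (k : ℕ) (S : Finset ℕ) :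
    ev x (sh k S) = x ^ k * ev x S := by
  simp only [ev, sh, Finset.sum_map, addRightEmbedding_apply, Finset.mul_sum]
  refine Finset.sum_congr rfl fun i _ => ?_
  ring

lemma ev_union {R : Type*} [CommRing R] (x : R) (S T : Finset ℕ) (h : Disjoint S T) :
    ev x (S ∪ T) = ev x S + ev x T := Finset.sum_union h

lemma mem_sh {k i : ℕ} {S : Finset ℕ} : i ∈ sh k S ↔ ∃ a ∈ S, a + k = i := by
  simp [sh]

lemma InA_sh {S : Finset ℕ} (h : InA S) (n : ℕ) : InA (sh (4 * n) S) := by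
  intro i hi
  obtain ⟨a, ha, rfl⟩ := mem_sh.1 hi
  have := h a ha
  omega

lemma InA_union {S T : Finset ℕ} (h : InA S) (h' : InA T) : InA (S ∪ T) := by
  intro i hi
  rcases Finset.mem_union.1 hi with hi | hi
  · exact h i hi
  · exact h' i hi

lemma ev_nonneg {b : ℝ} (hb : 0 ≤ b) (S : Finset ℕ) : 0 ≤ ev b S :=
  Finset.sum_nonneg fun i _ => by positivity

lemma exists_range (S : Finset ℕ) : ∃ n, ∀ i ∈ S, i < 4 * n := by
  refine ⟨S.sup id + 1, fun i hi => ?_⟩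
  have := Finset.le_sup (f := id) hi
  simp at this
  omega

lemma greedy (g : ℝ) (h1 : 1 < g) (h2 : g < 2) : ∀ (n : ℕ) (s : ℝ), 0 ≤ s → s < g ^ n →
    ∃ T : Finset ℕ, (∀ i ∈ T, i < n) ∧ 0 ≤ s - ev g T ∧ s - ev g T < 1 := by
  intro n
  induction n with
  | zero => intro s hs hs'; exact ⟨∅, by simp, by simpa [ev] using hs, by simpa [ev] using hs'⟩
  | succ n ih =>
    intro s hs hs'
    by_cases h : s < g ^ n
    · obtain ⟨T, hT, h3⟩ := ih s hs h
      exact ⟨T, fun i hi => (hT i hi).trans (Nat.lt_succ_self n), h3⟩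
    · push Not at h
      have hg : 0 < g ^ n := by positivity
      obtain ⟨T, hT, h3, h4⟩ := ih (s - g ^ n) (by linarith) (by rw [pow_succ] at hs'; nlinarith)
      have hn : n ∉ T := fun hn => lt_irrefl _ (hT n hn)
      have e : ev g (insert n T) = g ^ n + ev g T := by simp [ev, Finset.sum_insert hn]
      refine ⟨insert n T, ?_, by rw [e]; linarith, by rw [e]; linarith⟩
      intro i hi
      rcases Finset.mem_insert.1 hi with rfl | hi
      · exact Nat.lt_succ_self _
      · exact (hT i hi).trans (Nat.lt_succ_self n)

lemma class_approx (b : ℝ) (hb1 : 1 < b) (hb4 : b ^ 4 < 2) (j : ℕ) (hj : j < 4) (t : ℝ)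
    (ht : 0 ≤ t) : ∃ S : Finset ℕ, (∀ i ∈ S, i % 4 = j) ∧ 0 ≤ t - ev b S ∧ t - ev b S < b ^ j := by
  have hg : 1 < b ^ 4 := one_lt_pow₀ hb1 (by norm_num)
  have hbj : 0 < b ^ j := by positivity
  obtain ⟨n, hn⟩ := pow_unbounded_of_one_lt (t / b ^ j) hg
  obtain ⟨T, -, h3, h4⟩ := greedy (b ^ 4) hg hb4 n (t / b ^ j) (by positivity) hn
  have hinj : Function.Injective (fun i : ℕ => 4 * i + j) := fun a c h => by
    simp at h; omega
  have e : ev b (T.map ⟨_, hinj⟩) = b ^ j * ev (b ^ 4) T := by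
    simp only [ev, Finset.sum_map, Function.Embedding.coeFn_mk, Finset.mul_sum]
    refine Finset.sum_congr rfl fun i _ => ?_
    rw [← pow_mul]; ring
  refine ⟨T.map ⟨_, hinj⟩, ?_, ?_, ?_⟩
  · intro i hi
    simp only [Finset.mem_map, Function.Embedding.coeFn_mk] at hi
    obtain ⟨a, _, rfl⟩ := hi
    omega
  · rw [e]
    have : t = b ^ j * (t / b ^ j) := by field_simp
    rw [this, ← mul_sub]; positivity
  · rw [e]
    have : t = b ^ j * (t / b ^ j) := by field_simp
    rw [this, ← mul_sub]; nlinarith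

def fullA (n : ℕ) : Finset ℕ := (Finset.range (4 * n)).filter (fun i => i % 4 ≠ 3)

lemma mem_fullA {n i : ℕ} : i ∈ fullA n ↔ i < 4 * n ∧ i % 4 ≠ 3 := by simp [fullA]

lemma ev_fullA (b : ℝ) (C : ℝ) (hC : C * (b ^ 4 - 1) = 1 + b + b ^ 2) (n : ℕ) :
    ev b (fullA n) = C * ((b ^ 4) ^ n - 1) := by
  induction n with
  | zero => simp [fullA, ev]
  | succ n ih =>
    have : fullA (n + 1) = fullA n ∪ {4 * n, 4 * n + 1, 4 * n + 2} := by
      ext i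
      simp only [Finset.mem_union, mem_fullA, Finset.mem_insert, Finset.mem_singleton]
      omega
    rw [this, ev_union, ih]
    · have e : ev b {4 * n, 4 * n + 1, 4 * n + 2} = (b ^ 4) ^ n * (1 + b + b ^ 2) := by
        simp only [ev]
        rw [Finset.sum_insert (by simp), Finset.sum_insert (by simp), Finset.sum_singleton,
          ← pow_mul]
        ring
      rw [e, ← hC]; ring
    · rw [Finset.disjoint_left]
      intro i hi
      have := (mem_fullA.1 hi).1
      simp only [Finset.mem_insert, Finset.mem_singleton]
      omega

lemma interval_approx (b : ℝ) (hb1 : 1 < b) (hb4 : b ^ 4 < 2) (C : ℝ)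
    (hC : C * (b ^ 4 - 1) = 1 + b + b ^ 2) (n : ℕ) : ∀ s : ℝ, 0 < s → s < (b ^ 4) ^ n * C →
    ∃ S ⊆ fullA n, 0 < s - ev b S ∧ s - ev b S < C := by
  have hg : 1 < b ^ 4 := one_lt_pow₀ hb1 (by norm_num)
  have hCE : 1 + b + b ^ 2 < C := by nlinarith [sq_nonneg b]
  induction n with
  | zero => intro s h1 h2; exact ⟨∅, by simp, by simpa [ev] using h1, by simpa [ev] using h2⟩
  | succ n ih =>
    intro s h1 h2
    have hgn : 0 < (b ^ 4) ^ n := by positivity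
    have hsub : fullA n ⊆ fullA (n + 1) := fun i hi => by
      have := mem_fullA.1 hi
      exact mem_fullA.2 ⟨by omega, this.2⟩
    by_cases h : s < (b ^ 4) ^ n * C
    · obtain ⟨S, hS, h3⟩ := ih s h1 h
      exact ⟨S, hS.trans hsub, h3⟩
    · push Not at h
      obtain ⟨S, hS, h3, h4⟩ := ih (s - (b ^ 4) ^ n * (1 + b + b ^ 2))
        (by nlinarith) (by rw [← hC]; rw [pow_succ] at h2; nlinarith)
      have e : ev b {4 * n, 4 * n + 1, 4 * n + 2} = (b ^ 4) ^ n * (1 + b + b ^ 2) := by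
        simp only [ev]
        rw [Finset.sum_insert (by simp), Finset.sum_insert (by simp), Finset.sum_singleton,
          ← pow_mul]
        ring
      have e2 : ev b (S ∪ {4 * n, 4 * n + 1, 4 * n + 2})
          = ev b S + (b ^ 4) ^ n * (1 + b + b ^ 2) := by
        rw [ev_union, e]
        rw [Finset.disjoint_left]
        intro i hi
        have := (mem_fullA.1 (hS hi)).1
        simp only [Finset.mem_insert, Finset.mem_singleton]
        omega
      refine ⟨S ∪ {4 * n, 4 * n + 1, 4 * n + 2}, ?_, by rw [e2]; linarith, by rw [e2]; linarith⟩
      intro i hi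
      simp only [Finset.mem_union, Finset.mem_insert, Finset.mem_singleton] at hi
      rcases hi with hi | hi
      · exact hsub (hS hi)
      · rw [mem_fullA]; omega

lemma card_sep (s : Finset ℝ) (l C t : ℝ) (hl : 0 < l) 
    (h1 : ∀ y ∈ s, 0 < t - y ∧ t - y < C) (h2 : ∀ y ∈ s, ∀ y' ∈ s, y ≠ y' → l ≤ |y - y'|) :
    s.card ≤ ⌊C / l⌋₊ + 1 := by
  have : s.card ≤ (Finset.range (⌊C / l⌋₊ + 1)).card := by
    refine Finset.card_le_card_of_injOn (fun y => ⌊(t - y) / l⌋₊) ?_ ?_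
    · intro y hy
      have := h1 y hy
      simp only [Finset.coe_range, Set.mem_Iio]
      have h3 : (t - y) / l ≤ C / l := by gcongr; exact this.2.le
      have := Nat.floor_le_floor h3
      omega
    · intro y hy y' hy' h
      by_contra hne
      have h3 := h2 y hy y' hy' hne
      have p1 : 0 ≤ (t - y) / l := div_nonneg (h1 y hy).1.le hl.le
      have p2 : 0 ≤ (t - y') / l := div_nonneg (h1 y' hy').1.le hl.le
      simp only at h
      have a1 := Nat.floor_le p1
      have a2 := Nat.lt_floor_add_one ((t - y) / l)
      have a3 := Nat.floor_le p2
      have a4 := Nat.lt_floor_add_one ((t - y') / l)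
      rw [← h] at a3 a4
      have : |(t - y) / l - (t - y') / l| < 1 := by rw [abs_lt]; constructor <;> linarith
      rw [← sub_div, abs_div, abs_of_pos hl, div_lt_one hl] at this
      have e : t - y - (t - y') = -(y - y') := by ring
      rw [e, abs_neg] at this
      linarith
  simpa using this

lemma core' (b : ℝ) (hb1 : 1 < b) (hb4 : b ^ 4 < 2) (C : ℝ)
    (hC : C * (b ^ 4 - 1) = 1 + b + b ^ 2) (l : ℝ) (hl : 0 < l)
    (hsep : ∀ S S', InA S → InA S' → ev b S ≠ ev b S' → l ≤ |ev b S - ev b S'|) :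
    ∃ (n0 : ℕ) (τ : ℝ), 0 < τ ∧ τ < C ∧ ∀ S S', InA S → InA S' →
      τ - C < ev b S' - ev b S → ev b S' - ev b S < τ →
      ∃ R ⊆ fullA n0, ∃ Q ⊆ fullA n0,
        b ^ (4 * n0) * (ev b S' - ev b S) = ev b Q - ev b R := by
  classical
  have hg : 1 < b ^ 4 := one_lt_pow₀ hb1 (by norm_num)
  have hCE : 1 + b + b ^ 2 < C := by nlinarith [sq_nonneg b]
  have hC0 : 0 < C := by nlinarith
  have hA : ∀ {n S}, S ⊆ fullA n → InA S := fun h i hi => (mem_fullA.1 (h hi)).2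
  let V : ℕ → ℝ → Finset ℝ := fun n t =>
    ((fullA n).powerset.image (ev b)).filter (fun y => 0 < t - y ∧ t - y < C)
  have hV : ∀ n t y, y ∈ V n t ↔ (∃ S ⊆ fullA n, ev b S = y) ∧ 0 < t - y ∧ t - y < C := by
    intro n t y
    simp [V]
  have hcard : ∀ n t, (V n t).card ≤ ⌊C / l⌋₊ + 1 := by
    intro n t
    refine card_sep _ l C t hl (fun y hy => ((hV _ _ _).1 hy).2) ?_
    intro y hy y' hy' hne
    obtain ⟨S, hS, rfl⟩ := ((hV _ _ _).1 hy).1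
    obtain ⟨S', hS', rfl⟩ := ((hV _ _ _).1 hy').1
    exact hsep _ _ (hA hS) (hA hS') hne
  let K : Set ℕ := {k | ∃ n t, 0 < t ∧ t < (b ^ 4) ^ n * C ∧ (V n t).card = k}
  have hKb : BddAbove K := ⟨_, by rintro k ⟨n, t, -, -, rfl⟩; exact hcard n t⟩
  have hKn : K.Nonempty := ⟨_, 0, C / 2, by positivity, by simp; linarith, rfl⟩
  obtain ⟨n0, t0, ht0, ht0', hmax⟩ := Nat.sSup_mem hKn hKb
  have hmax' : ∀ n t, 0 < t → t < (b ^ 4) ^ n * C → (V n t).card ≤ (V n0 t0).card := by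
    intro n t h1 h2
    rw [hmax]; exact le_csSup hKb ⟨n, t, h1, h2, rfl⟩
  have hgn : 0 < (b ^ 4) ^ n0 := by positivity
  refine ⟨n0, t0 / (b ^ 4) ^ n0, by positivity, by rw [div_lt_iff₀ hgn]; linarith, ?_⟩
  intro S S' hS hS' h1 h2
  rw [pow_mul]
  obtain ⟨n1, hn1⟩ := exists_range S
  obtain ⟨n2, hn2⟩ := exists_range S'
  set n := max n1 n2 with hn
  have hSn : S ⊆ fullA n := fun i hi => mem_fullA.2 ⟨by have := hn1 i hi; omega, hS i hi⟩
  have hSn' : S' ⊆ fullA n := fun i hi => mem_fullA.2 ⟨by have := hn2 i hi; omega, hS' i hi⟩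
  have hcomb : ∀ {S Q}, S ⊆ fullA n → Q ⊆ fullA n0 → ∃ W ⊆ fullA (n + n0),
      ev b W = (b ^ 4) ^ n0 * ev b S + ev b Q := by
    intro S Q hS hQ
    refine ⟨sh (4 * n0) S ∪ Q, ?_, ?_⟩
    · intro i hi
      rcases Finset.mem_union.1 hi with hi | hi
      · obtain ⟨a, ha, rfl⟩ := mem_sh.1 hi
        have := mem_fullA.1 (hS ha)
        rw [mem_fullA]; omega
      · have := mem_fullA.1 (hQ hi)
        rw [mem_fullA]; omega
    · rw [ev_union, ev_sh, pow_mul]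
      rw [Finset.disjoint_left]
      intro i hi hi'
      obtain ⟨a, ha, rfl⟩ := mem_sh.1 hi
      have := mem_fullA.1 (hQ hi')
      omega
  set t := (b ^ 4) ^ n0 * ev b S + t0 with ht
  have hSle : ev b S ≤ C * ((b ^ 4) ^ n - 1) := by
    rw [← ev_fullA b C hC n]
    exact Finset.sum_le_sum_of_subset_of_nonneg hSn fun i _ _ => by positivity
  have hS0 : 0 ≤ ev b S := ev_nonneg (by linarith) S
  have htpos : 0 < t := by positivity
  have htlt : t < (b ^ 4) ^ (n + n0) * C := by
    rw [ht, pow_add]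
    nlinarith [mul_le_mul_of_nonneg_left hSle hgn.le]
  have hsub : (V n0 t0).image (fun y => (b ^ 4) ^ n0 * ev b S + y) ⊆ V (n + n0) t := by
    intro y hy
    obtain ⟨x, hx, rfl⟩ := Finset.mem_image.1 hy
    obtain ⟨⟨Q, hQ, rfl⟩, h3⟩ := (hV _ _ _).1 hx
    refine (hV _ _ _).2 ⟨hcomb hSn hQ, ?_⟩
    rw [ht, add_sub_add_left_eq_sub]; exact h3
  have heq := Finset.eq_of_subset_of_card_le hsub (by
    rw [Finset.card_image_of_injective _ (add_right_injective _)]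
    exact hmax' _ _ htpos htlt)
  have e0 : t0 = (b ^ 4) ^ n0 * (t0 / (b ^ 4) ^ n0) := by field_simp
  obtain ⟨R, hR, h3, h4⟩ := interval_approx b hb1 hb4 C hC n0 (t - (b ^ 4) ^ n0 * ev b S')
    (by rw [ht, e0]; nlinarith [mul_lt_mul_of_pos_left h2 hgn])
    (by rw [ht, e0]; nlinarith [mul_lt_mul_of_pos_left h1 hgn])
  have hm : (b ^ 4) ^ n0 * ev b S' + ev b R ∈ V (n + n0) t :=
    (hV _ _ _).2 ⟨hcomb hSn' hR, by linarith, by linarith⟩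
  rw [← heq] at hm
  obtain ⟨y, hy, hyy⟩ := Finset.mem_image.1 hm
  obtain ⟨⟨Q, hQ, rfl⟩, -⟩ := (hV _ _ _).1 hy
  refine ⟨R, hR, Q, hQ, ?_⟩
  linarith

lemma core (b : ℝ) (hb1 : 1 < b) (hb4 : b ^ 4 < 2) (l : ℝ) (hl : 0 < l)
    (hsep : ∀ S S', InA S → InA S' → ev b S ≠ ev b S' → l ≤ |ev b S - ev b S'|) :
    ∃ (n0 : ℕ), ∀ S S', InA S → InA S' → |ev b S' - ev b S| < 3 / 2 →
      ∃ R ⊆ fullA n0, ∃ Q ⊆ fullA n0,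
        b ^ (4 * n0) * (ev b S' - ev b S) = ev b Q - ev b R := by
  have hg : 1 < b ^ 4 := one_lt_pow₀ hb1 (by norm_num)
  have hC : (1 + b + b ^ 2) / (b ^ 4 - 1) * (b ^ 4 - 1) = 1 + b + b ^ 2 := by
    have : b ^ 4 - 1 ≠ 0 := by linarith
    field_simp
  set C := (1 + b + b ^ 2) / (b ^ 4 - 1)
  have hC3 : 3 < C := by nlinarith
  obtain ⟨n0, τ, h0, h1, H⟩ := core' b hb1 hb4 C hC l hl hsep
  refine ⟨n0, fun S S' hS hS' h => ?_⟩
  rw [abs_lt] at h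
  have H' : (τ - C < ev b S - ev b S' → ev b S - ev b S' < τ →
      ∃ R ⊆ fullA n0, ∃ Q ⊆ fullA n0,
        b ^ (4 * n0) * (ev b S' - ev b S) = ev b Q - ev b R) := by
    intro h3 h4
    obtain ⟨R, hR, Q, hQ, h5⟩ := H S' S hS' hS h3 h4
    exact ⟨Q, hQ, R, hR, by linarith⟩
  by_cases hd : 0 ≤ ev b S' - ev b S <;> by_cases hτ : C / 2 ≤ τ
  · exact H S S' hS hS' (by linarith) (by linarith)
  · exact H' (by linarith) (by linarith)
  · exact H' (by linarith) (by linarith)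
  · exact H S S' hS hS' (by linarith) (by linarith)

open Polynomial in
lemma aeval_ev {R : Type*} [CommRing R] (x : R) (S : Finset ℕ) :
    aeval x (ev (X : ℤ[X]) S) = ev x S := by
  simp [ev]

lemma ev_norm_le (α : ℂ) {n : ℕ} {S : Finset ℕ} (h : S ⊆ fullA n) :
    ‖ev α S‖ ≤ ∑ i ∈ fullA n, ‖α‖ ^ i := by
  calc ‖ev α S‖ ≤ ∑ i ∈ S, ‖α ^ i‖ := norm_sum_le _ _
    _ = ∑ i ∈ S, ‖α‖ ^ i := by simp
    _ ≤ _ := Finset.sum_le_sum_of_subset_of_nonneg h fun i _ _ => by positivity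

open Polynomial in
lemma sigma_bound (b : ℝ) (n0 : ℕ)
    (H : ∀ S S', InA S → InA S' → |ev b S' - ev b S| < 3 / 2 →
      ∃ R ⊆ fullA n0, ∃ Q ⊆ fullA n0,
        b ^ (4 * n0) * (ev b S' - ev b S) = ev b Q - ev b R)
    (α : ℂ) (hα : 1 ≤ ‖α‖) (hT : ∀ G : ℤ[X], aeval b G = 0 → aeval α G = 0) :
    ∃ M : ℝ, 0 ≤ M ∧ ∀ S S', InA S → InA S' → |ev b S' - ev b S| < 3 / 2 →
      ‖ev α S' - ev α S‖ ≤ M := by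
  refine ⟨2 * ∑ i ∈ fullA n0, ‖α‖ ^ i, by positivity, fun S S' hS hS' h => ?_⟩
  obtain ⟨R, hR, Q, hQ, e⟩ := H S S' hS hS' h
  have := hT (X ^ (4 * n0) * (ev X S' - ev X S) - (ev X Q - ev X R)) (by
    simp only [map_sub, map_mul, map_pow, aeval_X, aeval_ev]; linarith)
  simp only [map_sub, map_mul, map_pow, aeval_X, aeval_ev] at this
  have e2 : α ^ (4 * n0) * (ev α S' - ev α S) = ev α Q - ev α R := by linear_combination this
  have h1 : ‖α‖ ^ (4 * n0) * ‖ev α S' - ev α S‖ = ‖ev α Q - ev α R‖ := by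
    rw [← e2, norm_mul, norm_pow]
  have h2 : 1 ≤ ‖α‖ ^ (4 * n0) := one_le_pow₀ hα
  have h3 := norm_sub_le (ev α Q) (ev α R)
  have := ev_norm_le α hR
  have := ev_norm_le α hQ
  nlinarith [norm_nonneg (ev α S' - ev α S)]

lemma lip (b : ℝ) (hb1 : 1 < b) (hb4 : b ^ 4 < 2) (α : ℂ) (M : ℝ) 
    (H : ∀ S S', InA S → InA S' → |ev b S' - ev b S| < 3 / 2 → ‖ev α S' - ev α S‖ ≤ M) (k : ℕ) :
    ∀ S S', InA S → InA S' → |ev b S' - ev b S| ≤ (k : ℝ) / 2 →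
      ‖ev α S' - ev α S‖ ≤ (k + 1) * M := by
  have hM : 0 ≤ M := (norm_nonneg _).trans (H ∅ ∅ (by simp [InA]) (by simp [InA]) (by simp [ev]))
  suffices h : ∀ S S', InA S → InA S' → ev b S ≤ ev b S' → ev b S' - ev b S ≤ (k : ℝ) / 2 →
      ‖ev α S' - ev α S‖ ≤ (k + 1) * M by
    intro S S' hS hS' hk
    rcases le_total (ev b S) (ev b S') with h1 | h1
    · exact h S S' hS hS' h1 ((le_abs_self _).trans hk)
    · rw [norm_sub_rev]
      exact h S' S hS' hS h1 (by rw [abs_sub_comm] at hk; exact (le_abs_self _).trans hk)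
  induction k with
  | zero =>
    intro S S' hS hS' h1 h2
    have := H S S' hS hS' (by rw [abs_lt]; push_cast at h2; constructor <;> linarith)
    simpa using this
  | succ k ih =>
    intro S S' hS hS' h1 h2
    push_cast at h2 ⊢
    by_cases h3 : ev b S' - ev b S < 3 / 2
    · have := H S S' hS hS' (by rw [abs_lt]; constructor <;> linarith)
      have : 0 ≤ (k : ℝ) * M := by positivity
      nlinarith
    · push Not at h3
      have hS0 := ev_nonneg (by linarith : (0 : ℝ) ≤ b) S
      obtain ⟨U, hU, h4, h5⟩ := class_approx b hb1 hb4 0 (by norm_num) (ev b S' - 1 / 2)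
        (by linarith)
      have hUA : InA U := fun i hi => by rw [hU i hi]; norm_num
      rw [pow_zero] at h5
      have a1 := H U S' hUA hS' (by rw [abs_lt]; constructor <;> linarith)
      have a2 := ih S U hS hUA (by linarith) (by linarith)
      have : ev α S' - ev α S = (ev α S' - ev α U) + (ev α U - ev α S) := by ring
      rw [this]
      refine (norm_add_le _ _).trans ?_
      linarith

lemma hyers (f : ℕ → ℂ) (M : ℝ) (h : ∀ a c, ‖f (a + c) - f a - f c‖ ≤ M) :
    ∃ c : ℂ, ∀ n, ‖f n - c * n‖ ≤ M := by
  have hM : 0 ≤ M := (norm_nonneg _).trans (h 0 0)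
  have h1 : ∀ n k : ℕ, ‖f ((k + 1) * n) - (k + 1) * f n‖ ≤ k * M := by
    intro n k
    induction k with
    | zero => simp
    | succ k ih =>
      have := h ((k + 1) * n) n
      have e : f ((k + 1 + 1) * n) - ((k + 1 : ℕ) + 1) * f n
        = (f ((k + 1) * n + n) - f ((k + 1) * n) - f n) + (f ((k + 1) * n) - (k + 1) * f n) := by
        rw [add_mul (k + 1) 1 n, one_mul]; push_cast; ring
      rw [e]
      refine (norm_add_le _ _).trans ?_
      push_cast; linarith
  have h2 : ∀ n k : ℕ, ‖f ((n + 1) * (k + 1)) - (n + 1) * f (k + 1)‖ ≤ n * M := by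
    intro n k; exact h1 (k + 1) n
  let g : ℕ → ℂ := fun n => f (n + 1) / (n + 1)
  have h3 : ∀ n k : ℕ, ‖g n - g k‖ ≤ M * (1 / (n + 1) + 1 / (k + 1)) := by
    intro n k
    have n1 : (n + 1 : ℂ) ≠ 0 := by exact_mod_cast n.succ_ne_zero
    have k1 : (k + 1 : ℂ) ≠ 0 := by exact_mod_cast k.succ_ne_zero
    have e : g n - g k = ((f ((n + 1) * (k + 1)) - (n + 1) * f (k + 1))
        - (f ((k + 1) * (n + 1)) - (k + 1) * f (n + 1))) / ((n + 1) * (k + 1)) := by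
      simp only [g]; rw [mul_comm (k + 1) (n + 1)]; field_simp; ring
    have hn : ‖((n : ℂ) + 1) * (k + 1)‖ = (n + 1) * (k + 1) := by
      rw [norm_mul]; congr 1 <;> exact_mod_cast Complex.norm_natCast _
    rw [e, norm_div, hn, div_le_iff₀ (by positivity)]
    have e2 : M * (1 / ((n : ℝ) + 1) + 1 / (k + 1)) * ((n + 1) * (k + 1)) = M * (n + k + 2) := by
      field_simp; ring
    rw [e2]
    refine (norm_sub_le _ _).trans ?_
    have := h2 n k
    have := h2 k n
    linarith
  have hc : CauchySeq g := by
    rw [Metric.cauchySeq_iff']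
    intro ε hε
    obtain ⟨N, hN⟩ := exists_nat_gt (2 * M / ε)
    refine ⟨N, fun n hn => ?_⟩
    rw [dist_eq_norm]
    refine (h3 n N).trans_lt ?_
    have b1 : (1 : ℝ) / (n + 1) ≤ 1 / (N + 1) := by
      have : (N : ℝ) ≤ n := by exact_mod_cast hn
      gcongr
    have : M * (1 / ((n : ℝ) + 1) + 1 / (N + 1)) ≤ 2 * M / (N + 1) := by
      calc _ ≤ M * (1 / ((N : ℝ) + 1) + 1 / (N + 1)) := by gcongr
        _ = _ := by ring
    refine this.trans_lt ?_
    rw [div_lt_iff₀ (by positivity)]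
    rw [div_lt_iff₀ hε] at hN
    nlinarith
  obtain ⟨c, hc⟩ := cauchySeq_tendsto_of_complete hc
  refine ⟨c, fun n => ?_⟩
  rcases n with _ | n
  · have := h 0 0
    simp at this
    simpa using this
  · have l1 : Filter.Tendsto (fun k : ℕ => ‖g n - g k‖) Filter.atTop (nhds ‖g n - c‖) :=
      (tendsto_const_nhds.sub hc).norm
    have l2 : Filter.Tendsto (fun k : ℕ => M * (1 / ((n : ℝ) + 1) + 1 / ((k : ℝ) + 1))) Filter.atTop
        (nhds (M * (1 / ((n : ℝ) + 1) + 0))) :=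
      (tendsto_const_nhds.add tendsto_one_div_add_atTop_nhds_zero_nat).const_mul M
    have h4 := le_of_tendsto_of_tendsto' l1 l2 (fun k => h3 n k)
    have n1 : (n + 1 : ℂ) ≠ 0 := by exact_mod_cast n.succ_ne_zero
    have e : f (n + 1) - c * ((n + 1 : ℕ) : ℂ) = (g n - c) * (n + 1) := by
      simp only [g]; push_cast; field_simp
    have hn : ‖(n : ℂ) + 1‖ = n + 1 := by exact_mod_cast Complex.norm_natCast _
    rw [e, norm_mul, hn]
    rw [add_zero, mul_one_div, le_div_iff₀ (by positivity)] at h4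
    exact h4

lemma subset_sum_unbounded (α : ℂ) (hα : 1 ≤ ‖α‖) (M : ℝ)
    (H : ∀ S : Finset ℕ, (∀ i ∈ S, i % 4 = 0) → ‖ev α S‖ ≤ M) : False := by
  obtain ⟨N, hN⟩ := exists_nat_gt (4 * M)
  let I : Finset ℕ := (Finset.range N).map ⟨fun i => 4 * i, fun a c h => by simpa using h⟩
  have hI : ∀ i ∈ I, i % 4 = 0 := by
    intro i hi
    simp only [I, Finset.mem_map, Function.Embedding.coeFn_mk] at hi
    obtain ⟨a, _, rfl⟩ := hi
    change 4 * a % 4 = 0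
    omega
  have key : ∀ u : ℂ → ℝ, (∀ S : Finset ℕ, u (ev α S) = ∑ i ∈ S, u (α ^ i)) →
      (∀ w, |u w| ≤ ‖w‖) → ∑ i ∈ I, |u (α ^ i)| ≤ 2 * M := by
    intro u hu hu'
    rw [← Finset.sum_filter_add_sum_filter_not I (fun i => 0 ≤ u (α ^ i))]
    have a1 : ∑ i ∈ I.filter (fun i => 0 ≤ u (α ^ i)), |u (α ^ i)|
        = u (ev α (I.filter (fun i => 0 ≤ u (α ^ i)))) := by
      rw [hu]
      exact Finset.sum_congr rfl fun i hi => abs_of_nonneg (Finset.mem_filter.1 hi).2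
    have a2 : ∑ i ∈ I.filter (fun i => ¬ 0 ≤ u (α ^ i)), |u (α ^ i)|
        = - u (ev α (I.filter (fun i => ¬ 0 ≤ u (α ^ i)))) := by
      rw [hu, ← Finset.sum_neg_distrib]
      exact Finset.sum_congr rfl fun i hi => abs_of_neg (not_le.1 (Finset.mem_filter.1 hi).2)
    rw [a1, a2]
    have b1 := (le_abs_self _).trans ((hu' _).trans
      (H (I.filter (fun i => 0 ≤ u (α ^ i))) fun i hi => hI i (Finset.mem_filter.1 hi).1))
    have b2 := (neg_le_abs _).trans ((hu' _).trans
      (H (I.filter (fun i => ¬ 0 ≤ u (α ^ i))) fun i hi => hI i (Finset.mem_filter.1 hi).1))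
    linarith
  have k1 := key Complex.re (fun S => by simp [ev, Complex.re_sum]) Complex.abs_re_le_norm
  have k2 := key Complex.im (fun S => by simp [ev, Complex.im_sum]) Complex.abs_im_le_norm
  have k3 : (N : ℝ) ≤ ∑ i ∈ I, (|(α ^ i).re| + |(α ^ i).im|) := by
    have : (N : ℝ) = ∑ i ∈ I, (1 : ℝ) := by simp [I]
    rw [this]
    refine Finset.sum_le_sum fun i _ => ?_
    refine le_trans ?_ (Complex.norm_le_abs_re_add_abs_im _)
    rw [norm_pow]; exact one_le_pow₀ hα
  rw [Finset.sum_add_distrib] at k3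
  linarith

open Polynomial in
lemma conj_lt_one (b : ℝ) (hb1 : 1 < b) (hb4 : b ^ 4 < 2) (n0 : ℕ)
    (H : ∀ S S', InA S → InA S' → |ev b S' - ev b S| < 3 / 2 →
      ∃ R ⊆ fullA n0, ∃ Q ⊆ fullA n0,
        b ^ (4 * n0) * (ev b S' - ev b S) = ev b Q - ev b R)
    (α : ℂ) (hαb : α ≠ b) (hT : ∀ G : ℤ[X], aeval b G = 0 → aeval α G = 0) :
    ‖α‖ < 1 := by
  by_contra hα
  push Not at hα
  obtain ⟨M, hM, h1⟩ := sigma_bound b n0 H α hα hT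
  have hb2 : b ^ 2 < 2 := by nlinarith [sq_nonneg (b ^ 2 - 1)]
  have hL := lip b hb1 hb4 α M h1 10
  have hA : ∀ {j S}, j < 3 → (∀ i ∈ S, i % 4 = j) → InA S := fun hj h i hi => by
    rw [h i hi]; omega
  have cl : ∀ j : ℕ, j < 3 → ∀ n : ℕ, ∃ S : Finset ℕ, (∀ i ∈ S, i % 4 = j) ∧
      0 ≤ n - ev b S ∧ n - ev b S < 2 := by
    intro j hj n
    obtain ⟨S, h2, h3, h4⟩ := class_approx b hb1 hb4 j (by omega) n (by positivity)
    refine ⟨S, h2, h3, h4.trans_le ?_⟩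
    calc b ^ j ≤ b ^ 2 := pow_le_pow_right₀ hb1.le (by omega)
      _ ≤ 2 := hb2.le
  choose F0 p0 q0 r0 using cl 0 (by norm_num)
  choose F1 p1 q1 r1 using cl 1 (by norm_num)
  choose F2 p2 q2 r2 using cl 2 (by norm_num)
  have A0 := fun n => hA (by norm_num) (p0 n)
  have A1 := fun n => hA (by norm_num) (p1 n)
  have A2 := fun n => hA (by norm_num) (p2 n)
  set M1 := (((10 : ℕ) : ℝ) + 1) * M with hM1
  obtain ⟨c, hc⟩ := hyers (fun n => ev α (F0 n)) (3 * M1) (by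
    intro a d
    have d1 : Disjoint (F0 a) (F1 d) := by
      rw [Finset.disjoint_left]; intro i hi hi'
      have := p0 a i hi; have := p1 d i hi'; omega
    have e1 := hL (F0 a ∪ F1 d) (F2 (a + d)) (InA_union (A0 a) (A1 d)) (A2 _) (by
      rw [ev_union _ _ _ d1, abs_le]
      have := q0 a; have := r0 a; have := q1 d; have := r1 d
      have := q2 (a + d); have := r2 (a + d)
      push_cast at *
      constructor <;> linarith)
    have e2 := hL (F2 (a + d)) (F0 (a + d)) (A2 _) (A0 _) (by
      have := q2 (a + d); have := r2 (a + d)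
      have := q0 (a + d); have := r0 (a + d)
      rw [abs_le]; push_cast at *
      constructor <;> linarith)
    have e3 := hL (F0 d) (F1 d) (A0 _) (A1 _) (by
      have := q0 d; have := r0 d; have := q1 d; have := r1 d
      rw [abs_le]; push_cast at *
      constructor <;> linarith)
    rw [ev_union _ _ _ d1] at e1
    have e : ev α (F0 (a + d)) - ev α (F0 a) - ev α (F0 d) =
        (ev α (F2 (a + d)) - (ev α (F0 a) + ev α (F1 d))) + (ev α (F0 (a + d)) - ev α (F2 (a + d)))
        + (ev α (F1 d) - ev α (F0 d)) := by ring
    rw [e]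
    refine (norm_add₃_le).trans ?_
    linarith)
  have hlin : ∀ S, InA S → ‖ev α S - c * ev b S‖ ≤ 4 * M1 + ‖c‖ := by
    intro S hS
    set n := ⌊ev b S⌋₊
    have f1 := Nat.floor_le (ev_nonneg (by linarith : (0 : ℝ) ≤ b) S)
    have f2 := Nat.lt_floor_add_one (ev b S)
    have e1 := hL (F0 n) S (A0 n) hS (by
      have := q0 n; have := r0 n
      rw [abs_le]; push_cast at *
      constructor <;> linarith)
    have e2 := hc n
    have e3 : ‖c * ((n : ℝ) - ev b S : ℝ)‖ ≤ ‖c‖ := by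
      rw [norm_mul, Complex.norm_real, Real.norm_eq_abs]
      have : |(n : ℝ) - ev b S| ≤ 1 := by rw [abs_le]; constructor <;> linarith
      nlinarith [norm_nonneg c]
    have e : ev α S - c * ev b S = (ev α S - ev α (F0 n)) + (ev α (F0 n) - c * n)
      + c * ((n : ℝ) - ev b S : ℝ) := by push_cast; ring
    rw [e]
    refine (norm_add₃_le).trans ?_
    linarith
  set M2 := 4 * M1 + ‖c‖ with hM2
  have hc0 : c = 0 := by
    by_contra hc0
    have hpos : 0 < ‖c‖ * ‖α - b‖ := by
      have : α - b ≠ 0 := sub_ne_zero.2 hαb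
      positivity
    obtain ⟨n, hn⟩ := pow_unbounded_of_one_lt ((M2 + ‖α‖ * M2) / (‖c‖ * ‖α - b‖)) 
      (one_lt_pow₀ hb1 (by norm_num) : 1 < b ^ 4)
    rw [div_lt_iff₀ hpos] at hn
    have u1 := hlin {4 * n} (by intro i hi; simp at hi; omega)
    have u2 := hlin {4 * n + 1} (by intro i hi; simp at hi; omega)
    simp only [ev, Finset.sum_singleton] at u1 u2
    have e : α * (α ^ (4 * n) - c * ((b ^ (4 * n) : ℝ) : ℂ))
        - (α ^ (4 * n + 1) - c * ((b ^ (4 * n + 1) : ℝ) : ℂ))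
        = -(c * (((b ^ 4) ^ n : ℝ) : ℂ) * (α - b)) := by
      push_cast; ring
    have e2 := congrArg norm e
    rw [norm_neg, norm_mul, norm_mul, Complex.norm_real, Real.norm_of_nonneg (by positivity)] at e2
    have e3 := norm_sub_le (α * (α ^ (4 * n) - c * ((b ^ (4 * n) : ℝ) : ℂ)))
      (α ^ (4 * n + 1) - c * ((b ^ (4 * n + 1) : ℝ) : ℂ))
    rw [norm_mul] at e3
    have e4 := mul_le_mul_of_nonneg_left u1 (norm_nonneg α)
    have e5 : (b ^ 4) ^ n * (‖c‖ * ‖α - b‖) = ‖c‖ * (b ^ 4) ^ n * ‖α - b‖ := by ring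
    linarith
  refine subset_sum_unbounded α hα M2 fun S hS => ?_
  have := hlin S (hA (by norm_num) hS)
  simpa [hc0] using this

open Polynomial in
lemma integral_of_small {L : Type*} [Field L] [CharZero L] (x : L) (G : ℤ[X]) (hG : G ≠ 0)
    (hc : ∀ i, |G.coeff i| ≤ 1) (h : aeval x G = 0) : IsIntegral ℤ x := by
  have h1 : G.leadingCoeff ≠ 0 := leadingCoeff_ne_zero.2 hG
  have h2 := hc G.natDegree
  rw [coeff_natDegree, abs_le] at h2
  have h3 : G.leadingCoeff = 1 ∨ G.leadingCoeff = -1 := by omega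
  rcases h3 with h3 | h3
  · exact ⟨G, h3, h⟩
  · refine ⟨-G, ?_, ?_⟩
    · rw [Monic, leadingCoeff_neg, h3]; norm_num
    · have : aeval x (-G) = 0 := by rw [map_neg, h, neg_zero]
      exact this

open Polynomial in
lemma integral_inv_of_small {L : Type*} [Field L] [CharZero L] (x : L) (hx : x ≠ 0) (G : ℤ[X])
    (hG : G ≠ 0) (hc : ∀ i, |G.coeff i| ≤ 1) (h : aeval x G = 0) : IsIntegral ℤ x⁻¹ := by
  refine integral_of_small x⁻¹ G.reverse (by simpa using hG)
    (fun i => by rw [coeff_reverse]; exact hc _) ?_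
  letI := invertibleOfNonzero hx
  have := (eval₂_reverse_eq_zero_iff (algebraMap ℤ L) x G).2 h
  rwa [invOf_eq_inv] at this

open Polynomial in
lemma coeff_ev (S : Finset ℕ) (i : ℕ) : (ev (X : ℤ[X]) S).coeff i = if i ∈ S then 1 else 0 := by
  simp [ev, finset_sum_coeff, coeff_X_pow]

open Polynomial in
lemma exists_small (b : ℝ) (n0 : ℕ)
    (H : ∀ S S', InA S → InA S' → |ev b S' - ev b S| < 3 / 2 →
      ∃ R ⊆ fullA n0, ∃ Q ⊆ fullA n0,
        b ^ (4 * n0) * (ev b S' - ev b S) = ev b Q - ev b R) :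
    ∃ G : ℤ[X], G ≠ 0 ∧ (∀ i, |G.coeff i| ≤ 1) ∧ aeval b G = 0 := by
  obtain ⟨R, hR, Q, hQ, e⟩ := H ∅ {0} (by simp [InA]) (by simp [InA]) (by simp [ev]; norm_num)
  have nR : 4 * n0 ∉ R := fun h => by have := mem_fullA.1 (hR h); omega
  have nQ : 4 * n0 ∉ Q := fun h => by have := mem_fullA.1 (hQ h); omega
  refine ⟨X ^ (4 * n0) - (ev X Q - ev X R), ?_, ?_, ?_⟩
  · intro h
    have := congrArg (fun p => coeff p (4 * n0)) h
    simp [coeff_ev, nR, nQ] at this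
  · intro i
    simp only [coeff_sub, coeff_ev, coeff_X_pow]
    by_cases h : i = 4 * n0
    · subst h; simp [nR, nQ]
    · rw [if_neg h]
      split_ifs <;> simp
  · simp only [map_sub, map_pow, aeval_X, aeval_ev]
    simp [ev] at e ⊢
    linarith

lemma superadd {ι : Type*} (s : Finset ι) (ρ : ι → ℝ) (h : ∀ i ∈ s, 1 ≤ ρ i) :
    1 ≤ ∏ i ∈ s, ρ i ∧ ∑ i ∈ s, (ρ i - (ρ i)⁻¹) ≤ (∏ i ∈ s, ρ i) - (∏ i ∈ s, ρ i)⁻¹ := by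
  classical
  induction s using Finset.induction_on with
  | empty => simp
  | insert a s ha ih =>
    obtain ⟨h1, h2⟩ := ih fun i hi => h i (Finset.mem_insert_of_mem hi)
    have h3 := h a (Finset.mem_insert_self _ _)
    rw [Finset.prod_insert ha, Finset.sum_insert ha]
    set P := ∏ i ∈ s, ρ i
    refine ⟨by nlinarith, ?_⟩
    have e : ρ a * P - (ρ a * P)⁻¹ - (ρ a - (ρ a)⁻¹) - (P - P⁻¹)
      = (ρ a - 1) * (P - 1) * (ρ a * P - 1) / (ρ a * P) := by
      have : ρ a ≠ 0 := by linarith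
      have : P ≠ 0 := by linarith
      field_simp; ring
    have : 0 ≤ (ρ a - 1) * (P - 1) * (ρ a * P - 1) / (ρ a * P) := by
      have : 1 ≤ ρ a * P := by nlinarith
      have : 0 ≤ ρ a - 1 := by linarith
      have : 0 ≤ P - 1 := by linarith
      have : 0 ≤ ρ a * P - 1 := by linarith
      positivity
    linarith

lemma re_bound (w : ℂ) (h0 : w ≠ 0) (h1 : ‖w‖ < 1) : -(‖w‖⁻¹ - ‖w‖⁻¹⁻¹) ≤ (w - w⁻¹).re := by
  have hn : 0 < ‖w‖ := norm_pos_iff.2 h0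
  have e : (w - w⁻¹).re = - (w.re * ((‖w‖ ^ 2)⁻¹ - 1)) := by
    rw [Complex.sub_re, Complex.inv_re, Complex.normSq_eq_norm_sq]; ring
  have e2 : ‖w‖⁻¹ - ‖w‖⁻¹⁻¹ = ‖w‖ * ((‖w‖ ^ 2)⁻¹ - 1) := by field_simp; 
  rw [e, e2]
  have h3 : 0 ≤ (‖w‖ ^ 2)⁻¹ - 1 := by
    have : 1 ≤ (‖w‖ ^ 2)⁻¹ := (one_le_inv₀ (by positivity)).2 (by nlinarith)
    linarith
  have := Complex.re_le_norm w
  nlinarith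

lemma re_bound' (w : ℂ) (h0 : w ≠ 0) (h1 : ‖w‖ < 1) : (w - w⁻¹).re ≤ ‖w‖⁻¹ - ‖w‖⁻¹⁻¹ := by
  have := re_bound (-w) (by simpa using h0) (by simpa using h1)
  rw [norm_neg, inv_neg] at this
  simp only [Complex.sub_re, Complex.neg_re] at *
  linarith

open Polynomial IntermediateField in
lemma no_pisot (b : ℝ) (hb1 : 1 < b) (hb4 : b ^ 4 < 2) (hi : IsIntegral ℤ (b : ℂ))
    (hi' : IsIntegral ℤ (b : ℂ)⁻¹)
    (hconj : ∀ α : ℂ, α ≠ b → (∀ G : ℤ[X], aeval b G = 0 → aeval α G = 0) → ‖α‖ < 1) : False := by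
  classical
  have hbnum : b < 1.2 := by
    by_contra h
    push Not at h
    have : (1.2 : ℝ) ^ 4 ≤ b ^ 4 := by gcongr
    norm_num at this; linarith
  have hbC : (b : ℂ) ≠ 0 := by exact_mod_cast (by linarith : b ≠ 0)
  haveI : FiniteDimensional ℚ ℚ⟮(b : ℂ)⟯ := adjoin.finiteDimensional (hi.tower_top)
  let g : ℚ⟮(b : ℂ)⟯ := AdjoinSimple.gen ℚ (b : ℂ)
  have hg : ((g : ℚ⟮(b : ℂ)⟯) : ℂ) = b := rfl
  have inj : Function.Injective (algebraMap ℚ⟮(b : ℂ)⟯ ℂ) := (algebraMap ℚ⟮(b : ℂ)⟯ ℂ).injective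
  have gi : IsIntegral ℤ g := (isIntegral_algebraMap_iff inj).1 hi
  have gi' : IsIntegral ℤ g⁻¹ := (isIntegral_algebraMap_iff inj).1 (by rw [map_inv₀]; exact hi')
  have g0 : g ≠ 0 := by
    intro h; rw [h] at hg; exact hbC hg.symm
  let E := ℚ⟮(b : ℂ)⟯ →ₐ[ℚ] ℂ
  let σ0 : E := ℚ⟮(b : ℂ)⟯.val
  have hσ0 : σ0 g = b := rfl
  let s : Finset E := Finset.univ.erase σ0
  have hne : ∀ σ : E, σ g ≠ 0 := fun σ => by simpa using g0
  have hs : ∀ σ ∈ s, ‖σ g‖ < 1 := by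
    intro σ hσ
    refine hconj _ ?_ ?_
    · intro h
      refine (Finset.mem_erase.1 hσ).1 (adjoin_algHom_ext ℚ ?_)
      intro x hx
      obtain rfl := Set.mem_singleton_iff.1 hx
      exact h
    · intro G hG
      have h1 : aeval (b : ℂ) G = 0 := by
        have := aeval_algHom_apply (Complex.ofRealHom.toIntAlgHom) b G
        rw [hG, map_zero] at this
        exact this
      have h2 : aeval g G = 0 := by
        apply inj
        have := aeval_algHom_apply ((algebraMap ℚ⟮(b : ℂ)⟯ ℂ).toIntAlgHom) g G
        rw [map_zero]
        exact this.symm.trans h1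
      have := aeval_algHom_apply ((σ : ℚ⟮(b : ℂ)⟯ →+* ℂ).toIntAlgHom) g G
      rw [h2, map_zero] at this
      exact this
  -- traces
  have htr : ∀ x : ℚ⟮(b : ℂ)⟯, IsIntegral ℤ x → ∃ T : ℤ, (T : ℂ) = ∑ σ : E, σ x := by
    intro x hx
    obtain ⟨T, hT⟩ := IsIntegrallyClosed.isIntegral_iff.1 (Algebra.isIntegral_trace (L := ℚ) hx)
    refine ⟨T, ?_⟩
    rw [← trace_eq_sum_embeddings (K := ℚ) ℂ, ← hT]
    simp
  have hnm : ∀ x : ℚ⟮(b : ℂ)⟯, IsIntegral ℤ x → ∃ T : ℤ, (T : ℂ) = ∏ σ : E, σ x := by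
    intro x hx
    obtain ⟨T, hT⟩ := IsIntegrallyClosed.isIntegral_iff.1 (Algebra.isIntegral_norm ℚ hx)
    refine ⟨T, ?_⟩
    rw [← Algebra.norm_eq_prod_embeddings ℚ ℂ, ← hT]
    simp
  obtain ⟨N, hN⟩ := hnm g gi
  obtain ⟨N', hN'⟩ := hnm g⁻¹ gi'
  have hNN : N * N' = 1 := by
    have : (N : ℂ) * N' = 1 := by
      rw [hN, hN', ← Finset.prod_mul_distrib]
      refine Finset.prod_eq_one fun σ _ => ?_
      rw [map_inv₀, mul_inv_cancel₀ (hne σ)]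
    exact_mod_cast this
  have hNabs : ‖(N : ℂ)‖ = 1 := by
    rcases Int.eq_one_or_neg_one_of_mul_eq_one hNN with h | h <;> simp [h]
  have hb0 : ‖(b : ℂ)‖ = b := by rw [Complex.norm_real, Real.norm_of_nonneg (by linarith)]
  have hprod : ∏ σ ∈ s, ‖σ g‖⁻¹ = b := by
    have h1 : b * ∏ σ ∈ s, ‖σ g‖ = 1 := by
      rw [← hNabs, hN, norm_prod, ← Finset.mul_prod_erase _ _ (Finset.mem_univ σ0), hσ0, hb0]
    rw [Finset.prod_inv_distrib]
    exact (eq_inv_of_mul_eq_one_left h1).symm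
  have hρ : ∀ σ ∈ s, 1 < ‖σ g‖⁻¹ := fun σ hσ =>
    (one_lt_inv₀ (norm_pos_iff.2 (hne σ))).2 (hs σ hσ)
  obtain ⟨T, hT⟩ := htr (g - g⁻¹) (gi.sub gi')
  have hTre : (T : ℝ) = b - b⁻¹ + ∑ σ ∈ s, (σ g - (σ g)⁻¹).re := by
    have := congrArg Complex.re hT
    rw [← Finset.add_sum_erase _ _ (Finset.mem_univ σ0)] at this
    simp only [map_sub, map_inv₀, hσ0] at this
    rw [Complex.add_re, Complex.re_sum] at this
    rw [← Complex.ofReal_inv, ← Complex.ofReal_sub, Complex.ofReal_re] at this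
    rw [Complex.intCast_re] at this; exact this
  have hsum := (superadd s (fun σ => ‖σ g‖⁻¹) fun σ hσ => (hρ σ hσ).le).2
  rw [hprod] at hsum
  have hlow : ∑ σ ∈ s, -(‖σ g‖⁻¹ - ‖σ g‖⁻¹⁻¹) ≤ ∑ σ ∈ s, (σ g - (σ g)⁻¹).re :=
    Finset.sum_le_sum fun σ hσ => re_bound _ (hne σ) (hs σ hσ)
  have hup : ∑ σ ∈ s, (σ g - (σ g)⁻¹).re ≤ ∑ σ ∈ s, (‖σ g‖⁻¹ - ‖σ g‖⁻¹⁻¹) :=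
    Finset.sum_le_sum fun σ hσ => re_bound' _ (hne σ) (hs σ hσ)
  rw [Finset.sum_neg_distrib] at hlow
  have hbinv : b⁻¹ > 0.8 := by
    have : (1.25 : ℝ)⁻¹ < b⁻¹ := (inv_lt_inv₀ (by norm_num) (by linarith)).2 (by linarith)
    norm_num at this ⊢; linarith
  have hT0 : T = 0 := by
    have a1 : (T : ℝ) < 1 := by linarith
    have a2 : (-1 : ℝ) < T := by linarith
    have a1' : T < 1 := by exact_mod_cast a1
    have a2' : -1 < T := by exact_mod_cast a2
    omega
  rw [hT0, Int.cast_zero] at hTre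
  -- s nonempty
  have hsne : s.Nonempty := by
    rw [Finset.nonempty_iff_ne_empty]
    intro h
    rw [h, Finset.prod_empty] at hprod
    linarith
  obtain ⟨τ, hτ⟩ := hsne
  have hdec := superadd (s.erase τ) (fun σ => ‖σ g‖⁻¹)
    fun σ hσ => (hρ σ (Finset.mem_of_mem_erase hσ)).le
  set P := ∏ σ ∈ s.erase τ, ‖σ g‖⁻¹ with hP
  set r := ‖τ g‖⁻¹ with hr
  have hrP : r * P = b := by rw [← hprod, ← Finset.mul_prod_erase s _ hτ]
  have hr1 : 1 < r := hρ τ hτ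
  have hsum2 : ∑ σ ∈ s, (‖σ g‖⁻¹ - ‖σ g‖⁻¹⁻¹)
      = (r - r⁻¹) + ∑ σ ∈ s.erase τ, (‖σ g‖⁻¹ - ‖σ g‖⁻¹⁻¹) := by
    rw [← Finset.add_sum_erase s _ hτ]
  rcases hdec.1.eq_or_lt with hP1 | hP1
  · -- P = 1, so s = {τ}
    have hse : s.erase τ = ∅ := by
      by_contra h
      obtain ⟨κ, hκ⟩ := Finset.nonempty_iff_ne_empty.2 h
      have h1 := (superadd ((s.erase τ).erase κ) (fun σ => ‖σ g‖⁻¹)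
        fun σ hσ => (hρ σ (Finset.mem_of_mem_erase (Finset.mem_of_mem_erase hσ))).le).1
      have h2 := hρ κ (Finset.mem_of_mem_erase hκ)
      have h3 := Finset.mul_prod_erase (s.erase τ) (fun σ => ‖σ g‖⁻¹) hκ
      rw [← hP, ← hP1] at h3
      nlinarith
    have hrb : r = b := by rw [← hrP, ← hP1, mul_one]
    obtain ⟨U, hU⟩ := htr g gi
    rw [← Finset.add_sum_erase _ _ (Finset.mem_univ σ0), ← Finset.add_sum_erase s _ hτ, hse,
      Finset.sum_empty, add_zero, hσ0] at hU
    rw [← Finset.add_sum_erase s _ hτ, hse, Finset.sum_empty, add_zero] at hTre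
    have hnτ : ‖τ g‖ = b⁻¹ := inv_eq_iff_eq_inv.1 (hr.symm.trans hrb)
    have e : (τ g - (τ g)⁻¹).re = - ((τ g).re * (b ^ 2 - 1)) := by
      rw [Complex.sub_re, Complex.inv_re, Complex.normSq_eq_norm_sq, hnτ, inv_pow, div_inv_eq_mul]
      ring
    rw [e] at hTre
    have hre : (τ g).re = b⁻¹ := by
      have h1 : b ^ 2 - 1 ≠ 0 := by nlinarith
      have h2 : (b ^ 2 - 1) * ((τ g).re - b⁻¹) = 0 := by
        have : b ≠ 0 := by linarith
        have h3 : b ^ 2 * b⁻¹ = b := by field_simp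
        linear_combination hTre + (-1) * h3
      rcases mul_eq_zero.1 h2 with h | h
      · exact absurd h h1
      · linarith
    have hU2 := congrArg Complex.re hU
    rw [Complex.add_re, Complex.ofReal_re, hre] at hU2
    simp only [Complex.intCast_re] at hU2
    have hbi1 : b⁻¹ < 1 := inv_lt_one_of_one_lt₀ hb1
    have hbb : b * b⁻¹ = 1 := mul_inv_cancel₀ (by linarith)
    have u1 : (U : ℝ) < 3 := by linarith
    have u2 : (2 : ℝ) < U := by nlinarith
    have u1' : U < 3 := by exact_mod_cast u1
    have u2' : 2 < U := by exact_mod_cast u2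
    omega
  · have e : r * P - (r * P)⁻¹ - (r - r⁻¹) - (P - P⁻¹)
      = (r - 1) * (P - 1) * (r * P - 1) / (r * P) := by
      have : r ≠ 0 := by linarith
      have : P ≠ 0 := by linarith
      field_simp; ring
    have h2 : 0 < (r - 1) * (P - 1) * (r * P - 1) / (r * P) := by
      rw [hrP]
      have : 0 < r - 1 := by linarith
      have : 0 < P - 1 := by linarith
      have : 0 < b - 1 := by linarith
      positivity
    rw [← e, hrP] at h2
    have h3 := hdec.2
    linarith

lemma accum (b : ℝ) (hb1 : 1 < b) (hb4 : b ^ 4 < 2) (l : ℝ) (hl : 0 < l) :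
    ∃ S S', InA S ∧ InA S' ∧ 0 < ev b S - ev b S' ∧ ev b S - ev b S' < l := by
  by_contra hcon
  push Not at hcon
  have hsep : ∀ S S', InA S → InA S' → ev b S ≠ ev b S' → l ≤ |ev b S - ev b S'| := by
    intro S S' hS hS' hne
    rcases lt_or_gt_of_ne hne with h | h
    · rw [abs_sub_comm]
      exact (hcon S' S hS' hS (by linarith)).trans (le_abs_self _)
    · exact (hcon S S' hS hS' (by linarith)).trans (le_abs_self _)
  obtain ⟨n0, H⟩ := core b hb1 hb4 l hl hsep
  obtain ⟨G, hG, hc, h0⟩ := exists_small b n0 H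
  have h1 : Polynomial.aeval (b : ℂ) G = 0 := by
    have := Polynomial.aeval_algHom_apply (Complex.ofRealHom.toIntAlgHom) b G
    rw [h0, map_zero] at this
    exact this
  have hbC : (b : ℂ) ≠ 0 := by exact_mod_cast (by linarith : b ≠ 0)
  exact no_pisot b hb1 hb4 (integral_of_small _ G hG hc h1)
    (integral_inv_of_small _ hbC G hG hc h1)
    (fun α h2 h3 => conj_lt_one b hb1 hb4 n0 H α h2 h3)


lemma gap_cov (b : ℝ) (hb1 : 1 < b) (hb4 : b ^ 4 < 2) (δ : ℝ) (hδ : 0 < δ) (k : ℕ) :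
    ∃ (a : ℝ) (N : ℕ), ∀ s, 0 ≤ s → s < δ + k * (δ / 2) →
      ∃ W, InA W ∧ (∀ i ∈ W, i < 4 * N) ∧ s - δ < ev b W - a ∧ ev b W - a ≤ s := by
  induction k with
  | zero =>
    refine ⟨0, 0, fun s h0 h1 => ⟨∅, by simp [InA], by simp, ?_, ?_⟩⟩
    · simp [ev] at *; linarith
    · simp [ev]; linarith
  | succ k ih =>
    obtain ⟨a, N, h⟩ := ih
    have hb0 : 0 < b := by linarith
    have hB : 1 < b ^ 4 := one_lt_pow₀ hb1 (by norm_num)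
    have hBN : 0 < (b ^ 4) ^ N := by positivity
    obtain ⟨S, S', hS, hS', hd0, hd⟩ := accum b hb1 hb4 (δ / 2 / (b ^ 4) ^ N) (by positivity)
    obtain ⟨d, hdd⟩ : ∃ d, d = ev b S - ev b S' := ⟨_, rfl⟩
    rw [← hdd] at hd0 hd
    have hex : ∃ r, δ / 2 ≤ (b ^ 4) ^ r * d := by
      obtain ⟨r, hr⟩ := pow_unbounded_of_one_lt (δ / 2 / d) hB
      exact ⟨r, by rw [div_lt_iff₀ hd0] at hr; exact hr.le⟩
    classical
    obtain ⟨r, hr⟩ : ∃ r, r = Nat.find hex := ⟨_, rfl⟩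
    have hr1 : δ / 2 ≤ (b ^ 4) ^ r * d := hr ▸ Nat.find_spec hex
    have hmin : ∀ r' < r, (b ^ 4) ^ r' * d < δ / 2 := fun r' h' =>
      not_le.1 (Nat.find_min hex (hr ▸ h'))
    have hrN : N < r := by
      by_contra hc
      push Not at hc
      have h1 : (b ^ 4) ^ r ≤ (b ^ 4) ^ N := pow_le_pow_right₀ hB.le hc
      rw [lt_div_iff₀ hBN] at hd
      nlinarith
    have hr2 : (b ^ 4) ^ r * d < δ := by
      have := hmin (r - 1) (by omega)
      have e : (b ^ 4) ^ r = (b ^ 4) ^ (r - 1) * b ^ 4 := by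
        rw [← pow_succ]; congr 1; omega
      rw [e]
      have : 0 < (b ^ 4) ^ (r - 1) * d := by positivity
      nlinarith
    have hsh : ∀ T : Finset ℕ, ev b (sh (4 * r) T) = (b ^ 4) ^ r * ev b T := fun T => by
      rw [ev_sh, pow_mul]
    have hdisj : ∀ W T : Finset ℕ, (∀ i ∈ W, i < 4 * N) → Disjoint W (sh (4 * r) T) := by
      intro W T hW
      rw [Finset.disjoint_left]
      intro i hi hi'
      obtain ⟨c, _, hc⟩ := mem_sh.1 hi'
      have := hW i hi
      omega
    obtain ⟨n1, hn1⟩ := exists_range (sh (4 * r) S)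
    obtain ⟨n2, hn2⟩ := exists_range (sh (4 * r) S')
    have key : ∀ s, 0 ≤ s → s < δ + k * (δ / 2) → ∀ T, InA T →
        (∀ i ∈ sh (4 * r) T, i < 4 * (N + n1 + n2)) →
        ∃ W, InA W ∧ (∀ i ∈ W, i < 4 * (N + n1 + n2)) ∧
          s - δ < ev b W - (a + (b ^ 4) ^ r * ev b T) ∧
          ev b W - (a + (b ^ 4) ^ r * ev b T) ≤ s := by
      intro s h0 h1 T hT hTn
      obtain ⟨W, hW, hWN, h2, h3⟩ := h s h0 h1
      refine ⟨W ∪ sh (4 * r) T, InA_union hW (InA_sh hT r), ?_, ?_, ?_⟩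
      · intro i hi
        rcases Finset.mem_union.1 hi with hi | hi
        · have := hWN i hi; omega
        · exact hTn i hi
      · rw [ev_union _ _ _ (hdisj W T hWN), hsh]; linarith
      · rw [ev_union _ _ _ (hdisj W T hWN), hsh]; linarith
    refine ⟨a + (b ^ 4) ^ r * ev b S', N + n1 + n2, fun s h0 h1 => ?_⟩
    by_cases hs : s < δ + k * (δ / 2)
    · exact key s h0 hs S' hS' fun i hi => by have := hn2 i hi; omega
    · push Not at hs
      push_cast at h1
      have hk : (0 : ℝ) ≤ k * (δ / 2) := by positivity
      obtain ⟨W, hW, hWn, h2, h3⟩ := key (s - (b ^ 4) ^ r * d) (by linarith) (by linarith) S hS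
        fun i hi => by have := hn1 i hi; omega
      rw [hdd] at h2 h3
      exact ⟨W, hW, hWn, by linarith, by linarith⟩

lemma gap (b : ℝ) (hb1 : 1 < b) (hb4 : b ^ 4 < 2) (δ : ℝ) (hδ : 0 < δ) :
    ∃ K : ℝ, ∀ x, K ≤ x → ∃ S : Finset ℕ, x - δ < ev b S ∧ ev b S < x := by
  obtain ⟨k, hk⟩ := exists_nat_gt (b ^ 3 / (δ / 2 / 2))
  rw [div_lt_iff₀ (by positivity)] at hk
  obtain ⟨a, N, h⟩ := gap_cov b hb1 hb4 (δ / 2) (by positivity) k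
  refine ⟨a + δ, fun x hx => ?_⟩
  obtain ⟨U, hU, h1, h2⟩ := class_approx b hb1 hb4 3 (by norm_num) (x - a - δ / 2) (by linarith)
  obtain ⟨W, hW, _, h3, h4⟩ := h (x - a - δ / 2 - ev b U) h1 (by linarith)
  have hd : Disjoint W U := by
    rw [Finset.disjoint_left]
    intro i hi hi'
    exact hW i hi (hU i hi')
  refine ⟨W ∪ U, ?_, ?_⟩
  · rw [ev_union _ _ _ hd]; linarith
  · rw [ev_union _ _ _ hd]; linarith


def Rset (q : ℂ) (m : ℕ) : Set ℂ :=
  {z | ∃ x : ℕ → ℝ, (∀ j < m, 0 < x j ∧ x j < 1) ∧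
    z = ∑ j ∈ Finset.range m, q ^ (m - 1 - j) * (x j : ℂ)}

lemma sum_range_blocks (g : ℕ → ℂ) (m K : ℕ) :
    ∑ i ∈ Finset.range (m * K), g i =
      ∑ j ∈ Finset.range m, ∑ a ∈ Finset.range K, g (m * a + j) := by
  rw [Finset.sum_comm]
  induction K with
  | zero => simp
  | succ K ih =>
    rw [Nat.mul_succ, Finset.sum_range_add, ih, Finset.sum_range_succ]

lemma blocks (q : ℂ) (b : ℝ) (hb : 0 < b) (m : ℕ) (hq : q ^ m = (b : ℂ)) (hq0 : q ≠ 0)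
    (f : ℕ → ℕ) (K : ℕ) :
    ∑ i ∈ Finset.range (m * K), (f i : ℂ) / q ^ (i + 1) =
      ∑ j ∈ Finset.range m, q ^ (m - 1 - j) *
        ((∑ a ∈ Finset.range K, (f (m * a + j) : ℝ) / b ^ (a + 1) : ℝ) : ℂ) := by
  rw [sum_range_blocks]
  refine Finset.sum_congr rfl fun j hj => ?_
  rw [Finset.mem_range] at hj
  push_cast
  rw [Finset.mul_sum]
  refine Finset.sum_congr rfl fun a _ => ?_
  have e : (b : ℂ) ^ (a + 1) = q ^ (m * a + j + 1) * q ^ (m - 1 - j) := by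
    rw [← hq, ← pow_mul, ← pow_add]
    congr 1
    have : m * (a + 1) = m * a + m := by ring
    omega
  rw [e]
  field_simp

lemma geo_bound (b : ℝ) (hb : 1 < b) (f : ℕ → ℕ) (hf : ∀ i, f i ≤ 1) :
    Summable (fun a => (f a : ℝ) / b ^ (a + 1)) ∧
    0 ≤ ∑' a, (f a : ℝ) / b ^ (a + 1) ∧ (b - 1) * ∑' a, (f a : ℝ) / b ^ (a + 1) ≤ 1 := by
  have hb0 : 0 < b := by linarith
  have hg : HasSum (fun a : ℕ => 1 / b ^ (a + 1)) (1 / (b - 1)) := by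
    have h := (hasSum_geometric_of_lt_one (inv_nonneg.2 hb0.le) (inv_lt_one_of_one_lt₀ hb)).mul_left
      b⁻¹
    have e : b⁻¹ * (1 - b⁻¹)⁻¹ = 1 / (b - 1) := by
      have : b - 1 ≠ 0 := by linarith
      rw [← mul_inv, one_div]
      congr 1
      field_simp
    rw [e] at h
    have e2 : (fun a : ℕ => 1 / b ^ (a + 1)) = fun a => b⁻¹ * b⁻¹ ^ a := by
      funext a
      rw [inv_pow, ← mul_inv, one_div, pow_succ, mul_comm]
    rw [e2]
    exact h
  have hle : ∀ a, (f a : ℝ) / b ^ (a + 1) ≤ 1 / b ^ (a + 1) := fun a => by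
    have : (f a : ℝ) ≤ 1 := by exact_mod_cast hf a
    gcongr
  have hnn : ∀ a, 0 ≤ (f a : ℝ) / b ^ (a + 1) := fun a => by positivity
  have hs := Summable.of_nonneg_of_le hnn hle hg.summable
  refine ⟨hs, tsum_nonneg hnn, ?_⟩
  have := hs.tsum_le_tsum hle hg.summable
  rw [hg.tsum_eq] at this
  have h1 : 0 < b - 1 := by linarith
  calc _ ≤ (b - 1) * (1 / (b - 1)) := by gcongr
    _ = 1 := by field_simp

lemma mem_closed (q : ℂ) (b : ℝ) (hb : 1 < b) (m : ℕ) (hm : 0 < m) (hq : q ^ m = (b : ℂ))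
    (hq0 : q ≠ 0) (w : ℂ) (hw : w ∈ JC q) :
    ∃ x : ℕ → ℝ, (∀ j, 0 ≤ x j ∧ x j ≤ 1) ∧
      ((b : ℂ) - 1) * w = ∑ j ∈ Finset.range m, q ^ (m - 1 - j) * (x j : ℂ) := by
  obtain ⟨c, hc, hs⟩ := hw
  have hb0 : 0 < b := by linarith
  have hB : 0 < b - 1 := by linarith
  have G := fun j => geo_bound b hb (fun a => c (m * a + j + 1)) fun a => hc _
  refine ⟨fun j => (b - 1) * ∑' a, (c (m * a + j + 1) : ℝ) / b ^ (a + 1),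
    fun j => ⟨mul_nonneg hB.le (G j).2.1, (G j).2.2⟩, ?_⟩
  have h1 := hs.tendsto_sum_nat.comp
    (Filter.tendsto_id.const_mul_atTop' hm : Filter.Tendsto (fun K => m * K) Filter.atTop _)
  have h2 : Filter.Tendsto (fun K => ∑ j ∈ Finset.range m, q ^ (m - 1 - j) *
        ((∑ a ∈ Finset.range K, (c (m * a + j + 1) : ℝ) / b ^ (a + 1) : ℝ) : ℂ)) Filter.atTop
      (nhds (∑ j ∈ Finset.range m, q ^ (m - 1 - j) *
        ((∑' a, (c (m * a + j + 1) : ℝ) / b ^ (a + 1) : ℝ) : ℂ))) := by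
    refine tendsto_finset_sum _ fun j _ => ?_
    refine Filter.Tendsto.const_mul _ ?_
    exact (Complex.continuous_ofReal.tendsto _).comp (G j).1.hasSum.tendsto_sum_nat
  have h3 : w = ∑ j ∈ Finset.range m, q ^ (m - 1 - j) *
        ((∑' a, (c (m * a + j + 1) : ℝ) / b ^ (a + 1) : ℝ) : ℂ) := by
    refine tendsto_nhds_unique h1 (h2.congr fun K => ?_)
    exact (blocks q b hb0 m hq hq0 (fun i => c (i + 1)) K).symm
  rw [h3, Finset.mul_sum]
  refine Finset.sum_congr rfl fun j _ => ?_
  rw [Complex.ofReal_mul]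
  push_cast
  ring

lemma interior_mem (q : ℂ) (b : ℝ) (hb : 1 < b) (m : ℕ) (hm : 0 < m) (hq : q ^ m = (b : ℂ))
    (hq0 : q ≠ 0) (z : ℂ) (hz : z ∈ interior ((fun w => ((b : ℂ) - 1) * w) '' JC q)) :
    z ∈ Rset q m := by
  obtain ⟨c, hcc⟩ : ∃ c, c = ∑ j ∈ Finset.range m, q ^ (m - 1 - j) * (1 / 2 : ℂ) := ⟨_, rfl⟩
  have hcont : Filter.Tendsto (fun ε : ℝ => z + (ε : ℂ) * (z - c)) (nhdsWithin 0 (Set.Ioi 0))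
      (nhds z) := by
    have : Continuous (fun ε : ℝ => z + (ε : ℂ) * (z - c)) := by fun_prop
    have h := this.tendsto 0
    simp only [Complex.ofReal_zero, zero_mul, add_zero] at h
    exact h.mono_left nhdsWithin_le_nhds
  have h1 := hcont.eventually (mem_interior_iff_mem_nhds.1 hz)
  obtain ⟨ε, ⟨w, hw, hwe⟩, hε⟩ := (h1.and self_mem_nhdsWithin).exists
  have hε : 0 < ε := hε
  obtain ⟨x, hx, hxe⟩ := mem_closed q b hb m hm hq hq0 w hw
  simp only at hwe
  rw [hxe] at hwe
  refine ⟨fun j => (x j + ε / 2) / (1 + ε), fun j _ => ⟨?_, ?_⟩, ?_⟩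
  · have := (hx j).1; positivity
  · rw [div_lt_one (by positivity)]; have := (hx j).2; linarith
  · have hne : (1 + (ε : ℂ)) ≠ 0 := by exact_mod_cast (by positivity : (1 + ε) ≠ 0)
    have e : z = (∑ j ∈ Finset.range m, q ^ (m - 1 - j) * (x j : ℂ) + ε * c) / (1 + ε) := by
      rw [hwe]; field_simp; ring
    rw [hcc, Finset.mul_sum, ← Finset.sum_add_distrib, Finset.sum_div] at e
    rw [e]
    refine Finset.sum_congr rfl fun j _ => ?_
    push_cast
    field_simp

lemma ev_digits (b : ℝ) (hb : 0 < b) (N : ℕ) (S : Finset ℕ) (hS : ∀ i ∈ S, i < N) :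
    ∑ a ∈ Finset.range N, (((if N - 1 - a ∈ S then 1 else 0 : ℕ) : ℕ) : ℝ) / b ^ (a + 1) =
      ev b S / b ^ N := by
  rw [← Finset.sum_range_reflect]
  have h1 : ∀ a ∈ Finset.range N,
      (((if N - 1 - (N - 1 - a) ∈ S then 1 else 0 : ℕ) : ℕ) : ℝ) / b ^ (N - 1 - a + 1) =
      (if a ∈ S then b ^ a else 0) / b ^ N := by
    intro a ha
    rw [Finset.mem_range] at ha
    have e1 : N - 1 - (N - 1 - a) = a := by omega
    have e2 : b ^ N = b ^ (N - 1 - a + 1) * b ^ a := by rw [← pow_add]; congr 1; omega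
    rw [e1, e2]
    split_ifs
    · field_simp; simp
    · simp
  rw [Finset.sum_congr rfl h1, ← Finset.sum_div, ← Finset.sum_filter]
  congr 1
  unfold ev
  refine Finset.sum_congr ?_ fun _ _ => rfl
  ext i
  simp only [Finset.mem_filter, Finset.mem_range]
  exact ⟨fun h => h.2, fun h => ⟨hS i h, h⟩⟩

lemma step (q : ℂ) (b : ℝ) (hb : 1 < b) (hb4 : b ^ 4 < 2) (m : ℕ) (hm : 0 < m)
    (hq : q ^ m = (b : ℂ)) (hq0 : q ≠ 0) (r : ℂ) (hr : r ∈ Rset q m) (w : List ℕ)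
    (hw : ∀ c ∈ w, c ≤ 1) :
    ∃ (n : ℕ) (f : ℕ → ℕ) (o : ℕ), 0 < n ∧ (∀ i, f i ≤ 1) ∧ o + w.length ≤ n ∧
      (∀ i < w.length, f (o + i) = w.getD i 0) ∧
      ∃ r' ∈ Rset q m, r = ∑ i ∈ Finset.range n, (f i : ℂ) / q ^ (i + 1) + r' / q ^ n := by
  classical
  obtain ⟨x, hx, hxe⟩ := hr
  have hb0 : 0 < b := by linarith
  obtain ⟨L, hL⟩ : ∃ L, L = w.length + 1 := ⟨_, rfl⟩
  have hwd : ∀ i, w.getD i 0 ≤ 1 := by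
    intro i
    rw [List.getD_eq_getElem?_getD]
    rcases h : w[i]? with _ | c
    · simp
    · simpa using hw c (List.mem_of_getElem? h)
  obtain ⟨v, hv⟩ : ∃ v : ℕ → ℝ, v = fun j => ∑ a ∈ Finset.range L,
      (w.getD (m * a + j) 0 : ℝ) / b ^ (a + 1) := ⟨_, rfl⟩
  have hv0 : ∀ j, 0 ≤ v j := fun j => by rw [hv]; positivity
  obtain ⟨K, hK⟩ := gap b hb hb4 ((b ^ L)⁻¹) (by positivity)
  have hN : ∃ N, ∀ j < m, K + v j ≤ b ^ N * x j := by
    have : ∀ j, ∃ N0, j < m → ∀ N, N0 ≤ N → K + v j ≤ b ^ N * x j := by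
      intro j
      by_cases hj : j < m
      · obtain ⟨N0, h0⟩ := pow_unbounded_of_one_lt ((K + v j) / x j) hb
        refine ⟨N0, fun _ N hN => ?_⟩
        have h1 := (hx j hj).1
        rw [div_lt_iff₀ h1] at h0
        refine h0.le.trans ?_
        gcongr
        exact hb.le
      · exact ⟨0, fun h => absurd h hj⟩
    choose N0 h0 using this
    exact ⟨∑ j ∈ Finset.range m, N0 j, fun j hj => h0 j hj _
      (Finset.single_le_sum (f := N0) (fun _ _ => Nat.zero_le _) (Finset.mem_range.2 hj))⟩
  obtain ⟨N, hN⟩ := hN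
  have hS : ∀ j, ∃ S : Finset ℕ, j < m → b ^ N * x j - v j - (b ^ L)⁻¹ < ev b S ∧
      ev b S < b ^ N * x j - v j := by
    intro j
    by_cases hj : j < m
    · obtain ⟨S, h⟩ := hK (b ^ N * x j - v j) (by linarith [hN j hj])
      exact ⟨S, fun _ => h⟩
    · exact ⟨∅, fun h => absurd h hj⟩
  choose S hS using hS
  have hSN : ∀ j < m, ∀ i ∈ S j, i < N := by
    intro j hj i hi
    have h1 : b ^ i ≤ ev b (S j) :=
      Finset.single_le_sum (f := fun i => b ^ i) (fun _ _ => by positivity) hi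
    have h2 : b ^ N * x j < b ^ N * 1 := by
      have := (hx j hj).2
      gcongr
    have h3 : b ^ i < b ^ N := by linarith [(hS j hj).2, hv0 j]
    exact (pow_lt_pow_iff_right₀ hb).1 h3
  obtain ⟨f, hf⟩ : ∃ f : ℕ → ℕ, f = fun i =>
    if i < m * N then (if N - 1 - i / m ∈ S (i % m) then 1 else 0) else w.getD (i - m * N) 0 :=
    ⟨_, rfl⟩
  have hwL : w.length ≤ m * L := by nlinarith
  refine ⟨m * (N + L), f, m * N, by rw [hL]; positivity, ?_, by rw [mul_add]; omega, ?_, ?_⟩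
  · intro i
    rw [hf]
    dsimp only
    split_ifs
    · exact le_rfl
    · exact Nat.zero_le _
    · exact hwd _
  · intro i _
    rw [hf]
    dsimp only
    rw [if_neg (by omega)]
    congr 1
    omega
  · have hsum : ∀ j < m, ∑ a ∈ Finset.range (N + L), (f (m * a + j) : ℝ) / b ^ (a + 1) =
        ev b (S j) / b ^ N + v j / b ^ N := by
      intro j hj
      rw [Finset.sum_range_add, ← ev_digits b hb0 N (S j) (hSN j hj)]
      congr 1
      · refine Finset.sum_congr rfl fun a ha => ?_
        rw [Finset.mem_range] at ha
        have e1 : m * a + j < m * N := by nlinarith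
        have e2 : (m * a + j) / m = a := by
          rw [Nat.mul_add_div hm, Nat.div_eq_of_lt hj, add_zero]
        have e3 : (m * a + j) % m = j := by
          rw [Nat.mul_add_mod, Nat.mod_eq_of_lt hj]
        simp only [hf, if_pos e1, e2, e3]
      · rw [hv, Finset.sum_div]
        refine Finset.sum_congr rfl fun a _ => ?_
        have e1 : ¬ (m * (N + a) + j < m * N) := by rw [mul_add]; omega
        have e2 : m * (N + a) + j - m * N = m * a + j := by rw [mul_add]; omega
        simp only [hf, if_neg e1, e2]
        rw [div_div, ← pow_add]
        congr 2
        ring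
    refine ⟨∑ j ∈ Finset.range m, q ^ (m - 1 - j) *
      ((b ^ L * (b ^ N * x j - v j - ev b (S j)) : ℝ) : ℂ),
      ⟨fun j => b ^ L * (b ^ N * x j - v j - ev b (S j)), fun j hj => ⟨?_, ?_⟩, rfl⟩, ?_⟩
    · have := (hS j hj).2
      have h2 : 0 < b ^ N * x j - v j - ev b (S j) := by linarith
      positivity
    · have := (hS j hj).1
      have h2 : b ^ N * x j - v j - ev b (S j) < (b ^ L)⁻¹ := by linarith
      calc _ < b ^ L * (b ^ L)⁻¹ := mul_lt_mul_of_pos_left h2 (by positivity)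
        _ = 1 := by field_simp
    · rw [blocks q b hb0 m hq hq0, pow_mul, hq, Finset.sum_div, ← Finset.sum_add_distrib, hxe]
      refine Finset.sum_congr rfl fun j hj => ?_
      rw [Finset.mem_range] at hj
      rw [hsum j hj, mul_div_assoc, ← mul_add]
      congr 1
      have : x j = ev b (S j) / b ^ N + v j / b ^ N +
          b ^ L * (b ^ N * x j - v j - ev b (S j)) / b ^ (N + L) := by
        rw [pow_add]; field_simp; ring
      exact_mod_cast this

lemma extend (q : ℂ) (b : ℝ) (hb : 1 < b) (hb4 : b ^ 4 < 2) (m : ℕ) (hm : 0 < m)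
    (hq : q ^ m = (b : ℂ)) (hq0 : q ≠ 0) (z : ℂ) (n : ℕ) (g : ℕ → ℕ) (hg : ∀ i, g i ≤ 1)
    (hr : ∃ r ∈ Rset q m, z = ∑ i ∈ Finset.range n, (g i : ℂ) / q ^ (i + 1) + r / q ^ n)
    (w : List ℕ) (hw : ∀ c ∈ w, c ≤ 1) :
    ∃ (n' : ℕ) (g' : ℕ → ℕ), (∀ i, g' i ≤ 1) ∧
      (∃ r ∈ Rset q m, z = ∑ i ∈ Finset.range n', (g' i : ℂ) / q ^ (i + 1) + r / q ^ n') ∧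
      n < n' ∧ (∀ i < n, g' i = g i) ∧
      ∃ o, o + w.length ≤ n' ∧ ∀ i < w.length, g' (o + i) = w.getD i 0 := by
  obtain ⟨r, hr, hz⟩ := hr
  obtain ⟨k, f, o, hk, hf, hok, hfo, r', hr', hrr⟩ := step q b hb hb4 m hm hq hq0 r hr w hw
  refine ⟨n + k, fun i => if i < n then g i else f (i - n), fun i => ?_, ⟨r', hr', ?_⟩, by omega,
    fun i hi => if_pos hi, n + o, by omega, fun i hi => ?_⟩
  · dsimp only
    split_ifs
    · exact hg i
    · exact hf _
  · rw [hz, hrr, Finset.sum_range_add, add_div, Finset.sum_div, ← add_assoc]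
    congr 1
    · congr 1
      · refine Finset.sum_congr rfl fun i hi => ?_
        dsimp only
        rw [if_pos (Finset.mem_range.1 hi)]
      · refine Finset.sum_congr rfl fun i hi => ?_
        dsimp only
        rw [if_neg (by omega), show n + i - n = i by omega, div_div, ← pow_add]
        congr 2
        ring
    · rw [div_div, ← pow_add, add_comm]
  · dsimp only
    rw [if_neg (by omega), show n + o + i - n = o + i by omega]
    exact hfo i hi

lemma rset_bdd (q : ℂ) (m : ℕ) : ∃ M, ∀ r ∈ Rset q m, ‖r‖ ≤ M := by
  refine ⟨∑ j ∈ Finset.range m, ‖q ^ (m - 1 - j)‖, ?_⟩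
  rintro r ⟨x, hx, rfl⟩
  refine (norm_sum_le _ _).trans (Finset.sum_le_sum fun j hj => ?_)
  have := hx j (Finset.mem_range.1 hj)
  rw [norm_mul, Complex.norm_real, Real.norm_of_nonneg this.1.le]
  exact mul_le_of_le_one_right (norm_nonneg _) this.2.le

lemma universal_of_rset (q : ℂ) (b : ℝ) (hb : 1 < b) (hb4 : b ^ 4 < 2) (m : ℕ) (hm : 0 < m)
    (hq : q ^ m = (b : ℂ)) (hq1 : 1 < ‖q‖) (z : ℂ) (hz : z ∈ Rset q m) :
    ∃ d : ℕ → ℕ, IsExpansionC q z d ∧ Universal d := by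
  classical
  have hq0 : q ≠ 0 := by
    rintro rfl
    simp at hq1
    linarith
  obtain ⟨W, hW1, hW2⟩ : ∃ W : ℕ → List ℕ, (∀ k, ∀ c ∈ W k, c ≤ 1) ∧
      ∀ w : List ℕ, (∀ c ∈ w, c ≤ 1) → ∃ k, W k = w := by
    refine ⟨fun k => ((Encodable.decode (α := List ℕ) k).getD []).map fun c => min c 1, ?_, ?_⟩
    · intro k c hc
      obtain ⟨a, _, rfl⟩ := List.mem_map.1 hc
      exact min_le_right _ _
    · intro w hw
      refine ⟨Encodable.encode w, ?_⟩
      dsimp only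
      rw [Encodable.encodek, Option.getD_some]
      conv_rhs => rw [← List.map_id w]
      exact List.map_congr_left fun c hc => min_eq_left (hw c hc)
  let St := {s : ℕ × (ℕ → ℕ) // (∀ i, s.2 i ≤ 1) ∧
    ∃ r ∈ Rset q m, z = ∑ i ∈ Finset.range s.1, (s.2 i : ℂ) / q ^ (i + 1) + r / q ^ s.1}
  have hF : ∀ (s : St) (k : ℕ), ∃ s' : St, s.1.1 < s'.1.1 ∧ (∀ i < s.1.1, s'.1.2 i = s.1.2 i) ∧
      ∃ o, o + (W k).length ≤ s'.1.1 ∧ ∀ i < (W k).length, s'.1.2 (o + i) = (W k).getD i 0 := by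
    rintro ⟨⟨n, g⟩, hg, hr⟩ k
    obtain ⟨n', g', h1, h2, h3⟩ := extend q b hb hb4 m hm hq hq0 z n g hg hr (W k) (hW1 k)
    exact ⟨⟨(n', g'), h1, h2⟩, h3⟩
  choose F hF1 hF2 hF3 using hF
  let s0 : St := ⟨(0, fun _ => 0), fun _ => Nat.zero_le _, z, hz, by simp⟩
  let s : ℕ → St := fun k => Nat.rec s0 (fun k t => F t k) k
  have hs : ∀ k, s (k + 1) = F (s k) k := fun k => rfl
  have hmono : StrictMono fun k => (s k).1.1 := strictMono_nat_of_lt_succ fun k => by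
    rw [hs]; exact hF1 _ _
  have hag : ∀ k l, k ≤ l → ∀ i < (s k).1.1, (s l).1.2 i = (s k).1.2 i := by
    intro k l hkl
    induction l, hkl using Nat.le_induction with
    | base => intro i _; rfl
    | succ l hkl ih =>
      intro i hi
      rw [hs, hF2 _ _ i (lt_of_lt_of_le hi (hmono.monotone hkl)), ih i hi]
  have hd : ∀ k, ∀ i < (s k).1.1, (s (i + 1)).1.2 i = (s k).1.2 i := by
    intro k i hi
    have hi' : i < (s (i + 1)).1.1 := hmono.le_apply (x := i + 1)
    rcases le_total k (i + 1) with h | h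
    · exact hag _ _ h i hi
    · exact (hag _ _ h i hi').symm
  refine ⟨fun i => (s i).1.2 (i - 1), ⟨fun k => (s k).2.1 _, ?_⟩, ?_⟩
  · simp only [Nat.add_sub_cancel]
    have hsm : Summable fun k : ℕ => (((s (k + 1)).1.2 k : ℕ) : ℂ) / q ^ (k + 1) := by
      refine Summable.of_norm ?_
      have := (geo_bound ‖q‖ hq1 (fun k => (s (k + 1)).1.2 k) fun k => (s (k + 1)).2.1 _).1
      refine this.congr fun k => ?_
      rw [norm_div, norm_pow, Complex.norm_natCast]
    have h1 := hsm.hasSum.tendsto_sum_nat.comp hmono.tendsto_atTop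
    obtain ⟨M, hM⟩ := rset_bdd q m
    have h2 : Filter.Tendsto ((fun n => ∑ i ∈ Finset.range n,
        (((s (i + 1)).1.2 i : ℕ) : ℂ) / q ^ (i + 1)) ∘ fun k => (s k).1.1) Filter.atTop
        (nhds z) := by
      rw [tendsto_iff_norm_sub_tendsto_zero]
      have h3 : Filter.Tendsto (fun k => M * (‖q‖⁻¹) ^ (s k).1.1) Filter.atTop (nhds 0) := by
        have := ((tendsto_pow_atTop_nhds_zero_of_lt_one (inv_nonneg.2 (norm_nonneg q))
          (inv_lt_one_of_one_lt₀ hq1)).comp hmono.tendsto_atTop).const_mul M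
        rw [mul_zero] at this
        exact this
      refine squeeze_zero (fun _ => norm_nonneg _) (fun k => ?_) h3
      obtain ⟨r, hr, hzr⟩ := (s k).2.2
      have e : ∑ i ∈ Finset.range (s k).1.1, (((s (i + 1)).1.2 i : ℕ) : ℂ) / q ^ (i + 1) =
          ∑ i ∈ Finset.range (s k).1.1, (((s k).1.2 i : ℕ) : ℂ) / q ^ (i + 1) :=
        Finset.sum_congr rfl fun i hi => by rw [hd k i (Finset.mem_range.1 hi)]
      have e2 : ((fun n => ∑ i ∈ Finset.range n,
        (((s (i + 1)).1.2 i : ℕ) : ℂ) / q ^ (i + 1)) ∘ fun k => (s k).1.1) k - z =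
          - (r / q ^ (s k).1.1) := by
        rw [Function.comp_apply, e]
        linear_combination -hzr
      rw [e2, norm_neg, norm_div, norm_pow, div_eq_mul_inv, inv_pow]
      gcongr
      exact hM r hr
    exact (hsm.hasSum_iff).2 (tendsto_nhds_unique h1 h2)
  · intro w hw
    obtain ⟨k, rfl⟩ := hW2 w hw
    obtain ⟨o, ho, h⟩ := hF3 (s k) k
    refine ⟨o, fun i hi => ?_⟩
    rw [← h i hi, ← hs]
    have := hd (k + 1) (o + i) (by rw [hs]; omega)
    rw [← this]
    show (s (o + 1 + i)).1.2 (o + 1 + i - 1) = _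
    rw [show o + 1 + i = o + i + 1 by omega, Nat.add_sub_cancel]

theorem universal_expansion_root_of_unity_base (m : ℕ) (hm : 3 ≤ m) (ω : ℂ)
    (hω : ω ^ m = 1) (p : ℝ) (hp1 : 1 < p)
    (hp2 : p < (2 : ℝ) ^ ((1 : ℝ) / (4 * m)))
    (hPisot : ∀ x : ℝ, 1 < x → x ^ 4 = x ^ 3 + 1 → p ^ (2 * m) ≠ x)
    (q : ℂ) (hq : q = (p : ℂ) * ω) (z : ℂ)
    (hz : z ∈ interior ((fun w => ((p : ℂ) ^ m - 1) * w) '' JC q)) :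
    ∃ d : ℕ → ℕ, IsExpansionC q z d ∧ Universal d := by
  have hm0 : 0 < m := by omega
  have hmR : (0 : ℝ) < m := by exact_mod_cast hm0
  have hp0 : 0 < p := by linarith
  have hb : 1 < p ^ m := one_lt_pow₀ hp1 hm0.ne'
  have hb4 : (p ^ m) ^ 4 < 2 := by
    have h1 : p ^ (4 * m) < ((2 : ℝ) ^ ((1 : ℝ) / (4 * m))) ^ (4 * m) :=
      pow_lt_pow_left₀ hp2 hp0.le (by omega)
    rw [← Real.rpow_natCast ((2 : ℝ) ^ ((1 : ℝ) / (4 * m))), ← Real.rpow_mul (by norm_num)] at h1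
    have e : (1 : ℝ) / (4 * m) * ((4 * m : ℕ) : ℝ) = 1 := by push_cast; field_simp
    rw [e, Real.rpow_one] at h1
    rwa [← pow_mul, mul_comm m 4]
  have hnω : ‖ω‖ = 1 := Complex.norm_eq_one_of_pow_eq_one hω hm0.ne'
  have hq1 : ‖q‖ = p := by
    rw [hq, norm_mul, hnω, mul_one, Complex.norm_real, Real.norm_of_nonneg hp0.le]
  have hqm : q ^ m = ((p ^ m : ℝ) : ℂ) := by
    rw [hq, mul_pow, hω, mul_one, Complex.ofReal_pow]
  have hq0 : q ≠ 0 := by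
    rw [← norm_pos_iff, hq1]; exact hp0
  have hz' : z ∈ interior ((fun w => (((p ^ m : ℝ) : ℂ) - 1) * w) '' JC q) := by
    rw [Complex.ofReal_pow]; exact hz
  exact universal_of_rset q (p ^ m) hb hb4 m hm0 hqm (by rw [hq1]; exact hp1) z
    (interior_mem q (p ^ m) hb m hm0 hqm hq0 z hz')
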